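/- In S̄ = S/(m_{(a,b)} : a ≠ b), for any k > 0 and partition λ, the product m̄_{(k,k)} · m̄_{(λ,0)(0,1)^{|λ|}} lies in the linear span of { m̄_{(ν,0)(0,1)^{|ν|}} : ν a partition with ℓ(ν)+|ν| ≥ ℓ(λ)+|λ| }. -/

import Mathlib

/-- The monomial MacMahon symmetric function `m_Λ` attached to a bipartite partition
`Λ` (a multiset of vectors in `ℕ×ℕ`), as a formal power series in two families of
variables `xᵢ = X (i,0)`, `yᵢ = X (i,1)`: the sum, with coefficients `0` or `1`, of all
monomials whose multiset of exponent pairs equals `Λ`. -/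
noncomputable def mm (Λ : Multiset (ℕ × ℕ)) : MvPowerSeries (ℕ × Fin 2) ℂ :=
  fun d => if (d.support.image Prod.fst).val.map
      (fun i => (d (i, 0), d (i, 1))) = Λ then 1 else 0

/-- The bipartite partition `(λ,0)(0,1)^{|λ|}` attached to an ordinary partition `λ`. -/
noncomputable def bip (l : Multiset ℕ) : Multiset (ℕ × ℕ) :=
  l.map (fun i => (i, 0)) + Multiset.replicate l.sum (0, 1)

/-- The ideal of `S` generated by the `m_{(a,b)}` with `a ≠ b`, as a `ℂ`-submodule:
the span of the products `m_{(a,b)} · m_Λ`. -/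
noncomputable def Jbar : Submodule ℂ (MvPowerSeries (ℕ × Fin 2) ℂ) :=
  Submodule.span ℂ {x | ∃ (a b : ℕ) (Λ : Multiset (ℕ × ℕ)),
    a ≠ b ∧ (0, 0) ∉ Λ ∧ x = mm {(a, b)} * mm Λ}


namespace Aux

/-- exponent pair at index `i` -/
def pr (d : ℕ × Fin 2 →₀ ℕ) (i : ℕ) : ℕ × ℕ := (d (i, 0), d (i, 1))

/-- the multiset of exponent pairs -/
def ty (d : ℕ × Fin 2 →₀ ℕ) : Multiset (ℕ × ℕ) :=
  (d.support.image Prod.fst).val.map (pr d)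

/-- monomial with exponent pair `v` at index `i` -/
noncomputable def sg (i : ℕ) (v : ℕ × ℕ) : ℕ × Fin 2 →₀ ℕ :=
  Finsupp.single (i, 0) v.1 + Finsupp.single (i, 1) v.2

lemma pr_add (a b : ℕ × Fin 2 →₀ ℕ) (i : ℕ) : pr (a + b) i = pr a i + pr b i := rfl

lemma pr_sg (i j : ℕ) (v : ℕ × ℕ) : pr (sg i v) j = if i = j then v else 0 := by
  by_cases h : i = j <;> simp [pr, sg, h]

lemma pr_ext {a b : ℕ × Fin 2 →₀ ℕ} (h : ∀ i, pr a i = pr b i) : a = b := by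
  ext ⟨i, j⟩
  have := h i
  simp only [pr, Prod.mk.injEq] at this
  fin_cases j
  · exact this.1
  · exact this.2

lemma mem_sup (d : ℕ × Fin 2 →₀ ℕ) (i : ℕ) :
    i ∈ d.support.image Prod.fst ↔ pr d i ≠ 0 := by
  simp only [Finset.mem_image, Finsupp.mem_support_iff, pr, ne_eq, Prod.mk_eq_zero, not_and_or]
  constructor
  · rintro ⟨⟨a, b⟩, h, rfl⟩
    fin_cases b
    · exact Or.inl h
    · exact Or.inr h
  · rintro (h | h)
    · exact ⟨_, h, rfl⟩
    · exact ⟨_, h, rfl⟩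

lemma zero_notMem_ty (d : ℕ × Fin 2 →₀ ℕ) : (0 : ℕ × ℕ) ∉ ty d := by
  intro h
  obtain ⟨i, hi, h⟩ := Multiset.mem_map.1 h
  exact (mem_sup d i).1 hi h

lemma ty_add_sg (e : ℕ × Fin 2 →₀ ℕ) (i : ℕ) (he : pr e i = 0) (u : ℕ × ℕ) (hu : u ≠ 0) :
    ty (e + sg i u) = u ::ₘ ty e := by
  have hi : i ∉ e.support.image Prod.fst := by rw [mem_sup]; simpa using he
  have hs : (e + sg i u).support.image Prod.fst = insert i (e.support.image Prod.fst) := by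
    ext j
    rw [Finset.mem_insert, mem_sup, mem_sup, pr_add, pr_sg]
    by_cases h : i = j
    · subst h; simp [he, hu]
    · simp [h, Ne.symm h]
  unfold ty
  rw [hs, Finset.insert_val_of_notMem hi, Multiset.map_cons]
  congr 1
  · rw [pr_add, pr_sg, he]; simp
  · apply Multiset.map_congr rfl
    intro j hj
    have : i ≠ j := by rintro rfl; exact hi hj
    rw [pr_add, pr_sg]; simp [this]

lemma sg_zero (i : ℕ) : sg i 0 = 0 := by simp [sg]

lemma sg_add (i : ℕ) (u v : ℕ × ℕ) : sg i (u + v) = sg i u + sg i v := by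
  apply pr_ext; intro j; rw [pr_add]; simp only [pr_sg]; split <;> simp

lemma decomp (d : ℕ × Fin 2 →₀ ℕ) (i : ℕ) : ∃ e, pr e i = 0 ∧ d = e + sg i (pr d i) := by
  have hle : sg i (pr d i) ≤ d := by
    rintro ⟨j, b⟩
    have h := pr_sg i j (pr d i)
    by_cases hij : i = j
    · subst hij
      simp only [if_true, pr, Prod.mk.injEq] at h
      fin_cases b
      · exact h.1.le
      · exact h.2.le
    · simp only [hij, if_false, pr, Prod.mk_eq_zero] at h
      fin_cases b
      · exact h.1.le.trans (Nat.zero_le _)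
      · exact h.2.le.trans (Nat.zero_le _)
  obtain ⟨e, he⟩ := exists_add_of_le hle
  refine ⟨e, ?_, by rw [add_comm]; exact he⟩
  have := congrArg (fun x => pr x i) he
  simp only [pr_add, pr_sg, if_true] at this
  simpa using this

lemma ty_zero : ty 0 = 0 := by simp [ty]

lemma ty_eq_zero {d : ℕ × Fin 2 →₀ ℕ} (h : ty d = 0) : d = 0 := by
  apply pr_ext
  intro i
  by_contra hne
  have := (mem_sup d i).2 hne
  have := Multiset.mem_map_of_mem (pr d) this
  rw [show Multiset.map (pr d) _ = ty d from rfl, h] at this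
  simp at this

lemma ty_single {d : ℕ × Fin 2 →₀ ℕ} {v : ℕ × ℕ} (hv : v ≠ 0) :
    ty d = {v} ↔ ∃ i, d = sg i v := by
  constructor
  · intro h
    have hm : v ∈ ty d := by rw [h]; simp
    obtain ⟨i, hi, hiv⟩ := Multiset.mem_map.1 hm
    obtain ⟨e, he, hd⟩ := decomp d i
    rw [hiv] at hd
    rw [hd, ty_add_sg e i he v hv] at h
    have : ty e = 0 := by
      have h' : v ::ₘ ty e = v ::ₘ 0 := h
      exact (Multiset.cons_inj_right v).1 h'
    rw [ty_eq_zero this] at hd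
    exact ⟨i, by simpa using hd⟩
  · rintro ⟨i, rfl⟩
    have := ty_add_sg 0 i rfl v hv
    simpa [ty_zero] using this

/-- product of factorials of multiplicities -/
def fc (L : Multiset (ℕ × ℕ)) : ℕ := ∏ u ∈ L.toFinset, (L.count u).factorial

lemma fc_ne (L : Multiset (ℕ × ℕ)) : fc L ≠ 0 :=
  Finset.prod_ne_zero_iff.2 fun _ _ => Nat.factorial_ne_zero _

lemma fc_eq (L : Multiset (ℕ × ℕ)) (s : Finset (ℕ × ℕ)) (h : L.toFinset ⊆ s) :
    fc L = ∏ u ∈ s, (L.count u).factorial := by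
  apply Finset.prod_subset h
  intro x _ hx
  rw [Multiset.mem_toFinset] at hx
  simp [Multiset.count_eq_zero_of_notMem hx]

lemma fc_cons (a : ℕ × ℕ) (L : Multiset (ℕ × ℕ)) :
    fc (a ::ₘ L) = (a ::ₘ L).count a * fc L := by
  rw [fc_eq L (a ::ₘ L).toFinset (by simp), fc]
  have ha : a ∈ (a ::ₘ L).toFinset := by simp
  rw [← Finset.mul_prod_erase _ _ ha, ← Finset.mul_prod_erase _ _ ha, ← mul_assoc]
  congr 1
  · rw [Multiset.count_cons_self, Nat.factorial_succ]
  · apply Finset.prod_congr rfl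
    intro x hx
    rw [Multiset.count_cons_of_ne (Finset.ne_of_mem_erase hx)]

/-- augmented monomial function -/
noncomputable def mt (L : Multiset (ℕ × ℕ)) : MvPowerSeries (ℕ × Fin 2) ℂ :=
  (fc L : ℂ) • mm L

lemma coeff_mm (L : Multiset (ℕ × ℕ)) (d : ℕ × Fin 2 →₀ ℕ) :
    MvPowerSeries.coeff d (mm L) = if ty d = L then 1 else 0 := rfl

lemma local_id (d : ℕ × Fin 2 →₀ ℕ) (i : ℕ) (v : ℕ × ℕ) (hv : v ≠ 0) (L : Multiset (ℕ × ℕ))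
    (hL : (0 : ℕ × ℕ) ∉ L) :
    (∑ p ∈ Finset.HasAntidiagonal.antidiagonal d, if p.1 = sg i v ∧ ty p.2 = L then (1 : ℂ) else 0) =
    (if pr d i = v ∧ ty d = v ::ₘ L then 1 else 0) +
    ∑ u ∈ L.toFinset, if pr d i = u + v ∧ ty d = (u + v) ::ₘ L.erase u then (1 : ℂ) else 0 := by
  obtain ⟨e, he, hd⟩ := decomp d i
  by_cases hle : ∃ u, pr d i = u + v
  · obtain ⟨u, hu⟩ := hle
    have huv : u + v ≠ 0 := by
      intro h; apply hv; exact (add_eq_zero.1 h).2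
    have hd' : d = sg i v + (e + sg i u) := by rw [hd, hu, sg_add]; abel
    have hty : ty d = (u + v) ::ₘ ty e := by rw [hd, hu]; exact ty_add_sg e i he _ huv
    have h1 : (∑ p ∈ Finset.HasAntidiagonal.antidiagonal d, if p.1 = sg i v ∧ ty p.2 = L then (1 : ℂ) else 0) =
        if ty (e + sg i u) = L then 1 else 0 := by
      rw [Finset.sum_eq_single (sg i v, e + sg i u)]
      · simp
      · rintro ⟨a, b⟩ hab hne
        rw [Finset.HasAntidiagonal.mem_antidiagonal] at hab
        rw [if_neg]
        rintro ⟨rfl, -⟩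
        apply hne
        dsimp only at hab
        rw [hd'] at hab
        rw [add_left_cancel hab]
      · intro h
        exact absurd (Finset.HasAntidiagonal.mem_antidiagonal.2 hd'.symm) h
    rw [h1, hu]
    by_cases hu0 : u = 0
    · subst hu0
      rw [Finset.sum_eq_zero]
      · rw [sg_zero, add_zero, hty, zero_add]; simp [Multiset.cons_inj_right]
      · intro x hx
        rw [if_neg]
        rintro ⟨hx', -⟩
        have : x = 0 := (add_right_cancel hx').symm
        subst this
        exact hL (Multiset.mem_toFinset.1 hx)
    · rw [if_neg (c := u + v = v ∧ _) (by rintro ⟨h, -⟩; exact hu0 (by simpa using h)), zero_add,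
        ty_add_sg e i he u hu0, hty]
      have h2 : ∀ x ∈ L.toFinset, (if u + v = x + v ∧ (u + v) ::ₘ ty e = (x + v) ::ₘ L.erase x
          then (1 : ℂ) else 0) = if u = x then (if ty e = L.erase u then 1 else 0) else 0 := by
        intro x _
        by_cases hx : u = x
        · subst hx; simp [Multiset.cons_inj_right]
        · simp [hx]
      rw [Finset.sum_congr rfl h2, Finset.sum_ite_eq]
      by_cases hmem : u ∈ L
      · rw [if_pos (Multiset.mem_toFinset.2 hmem)]
        congr 1
        apply propext
        constructor
        · rintro rfl; simp
        · intro h; rw [h, Multiset.cons_erase hmem]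
      · rw [if_neg (c := u ∈ L.toFinset) (by simpa using hmem), if_neg]
        rintro rfl; simp at hmem
  · push Not at hle
    rw [Finset.sum_eq_zero, Finset.sum_eq_zero, if_neg, add_zero]
    · rintro ⟨h, -⟩; exact hle 0 (by simpa using h)
    · intro x _
      rw [if_neg]
      rintro ⟨h, -⟩; exact hle x h
    · rintro ⟨a, b⟩ hab
      rw [if_neg]
      rintro ⟨h, -⟩
      dsimp only at h
      rw [Finset.HasAntidiagonal.mem_antidiagonal] at hab
      apply hle (pr b i)
      rw [← hab]
      dsimp only
      rw [h, pr_add, pr_sg, if_pos rfl, add_comm]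

lemma count_ty (d : ℕ × Fin 2 →₀ ℕ) (x : ℕ × ℕ) :
    ((ty d).count x : ℂ) = ∑ i ∈ d.support.image Prod.fst, if pr d i = x then 1 else 0 := by
  unfold ty
  rw [Multiset.count_map, Finset.sum_boole]
  congr 1
  rw [Finset.card_def, Finset.filter_val]
  congr 1
  apply Multiset.filter_congr
  intros; exact eq_comm

lemma mm_mul (v : ℕ × ℕ) (hv : v ≠ 0) (L : Multiset (ℕ × ℕ)) (hL : (0 : ℕ × ℕ) ∉ L)
    (d : ℕ × Fin 2 →₀ ℕ) :
    MvPowerSeries.coeff d (mm {v} * mm L) =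
      (if ty d = v ::ₘ L then ((v ::ₘ L).count v : ℂ) else 0) +
      ∑ u ∈ L.toFinset, if ty d = (u + v) ::ₘ L.erase u then
        (((u + v) ::ₘ L.erase u).count (u + v) : ℂ) else 0 := by
  rw [MvPowerSeries.coeff_mul]
  have h1 : ∀ p ∈ Finset.HasAntidiagonal.antidiagonal d, MvPowerSeries.coeff p.1 (mm {v}) *
      MvPowerSeries.coeff p.2 (mm L) = ∑ i ∈ d.support.image Prod.fst,
        if p.1 = sg i v ∧ ty p.2 = L then (1 : ℂ) else 0 := by
    rintro ⟨a, b⟩ hab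
    rw [Finset.HasAntidiagonal.mem_antidiagonal] at hab
    dsimp only at hab ⊢
    rw [coeff_mm, coeff_mm]
    by_cases ha : ty a = {v}
    · obtain ⟨i, rfl⟩ := (ty_single hv).1 ha
      rw [if_pos ha, one_mul, Finset.sum_eq_single i]
      · simp
      · intro j _ hj
        rw [if_neg]
        rintro ⟨h, -⟩
        have := congrArg (fun x => pr x i) h
        simp only [pr_sg, if_true, hj, if_false] at this
        exact hv this
      · intro hi
        exfalso
        apply hi
        rw [mem_sup, ← hab, pr_add, pr_sg, if_pos rfl]
        intro h; exact hv (add_eq_zero.1 h).1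
    · rw [if_neg ha, zero_mul, Finset.sum_eq_zero]
      intro i _
      rw [if_neg]
      rintro ⟨h, -⟩
      exact ha ((ty_single hv).2 ⟨i, h⟩)
  have h2 : ∀ x M, (∑ i ∈ d.support.image Prod.fst,
      if pr d i = x ∧ ty d = M then (1 : ℂ) else 0) = if ty d = M then (M.count x : ℂ) else 0 := by
    intro x M
    by_cases h : ty d = M
    · rw [if_pos h, ← h, count_ty]; simp
    · simp [h]
  rw [Finset.sum_congr rfl h1, Finset.sum_comm,
    Finset.sum_congr rfl (fun i _ => local_id d i v hv L hL), Finset.sum_add_distrib, h2,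
    Finset.sum_comm, Finset.sum_congr rfl (fun u _ => h2 _ _)]

lemma mt_mul (v : ℕ × ℕ) (hv : v ≠ 0) (L : Multiset (ℕ × ℕ)) (hL : (0 : ℕ × ℕ) ∉ L) :
    mm {v} * mt L = mt (v ::ₘ L) + (L.map fun u => mt ((u + v) ::ₘ L.erase u)).sum := by
  rw [Finset.sum_multiset_map_count]
  ext d
  rw [mt, mul_smul_comm, map_smul, mm_mul v hv L hL, map_add, map_sum, smul_add, Finset.smul_sum]
  congr 1
  · rw [mt, map_smul, coeff_mm, fc_cons]
    split <;> simp [mul_comm]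
  · apply Finset.sum_congr rfl
    intro u hu
    rw [Multiset.mem_toFinset] at hu
    rw [mt, map_nsmul, map_smul, coeff_mm, fc_cons]
    have : fc L = L.count u * fc (L.erase u) := by
      conv_lhs => rw [← Multiset.cons_erase hu, fc_cons, Multiset.cons_erase hu]
    rw [this]
    split
    · simp only [smul_eq_mul, nsmul_eq_mul, Nat.cast_mul]; ring
    · simp

lemma mm_of_mt (L : Multiset (ℕ × ℕ)) : mm L = (fc L : ℂ)⁻¹ • mt L := by
  rw [mt, smul_smul, inv_mul_cancel₀ (by exact_mod_cast fc_ne L), one_smul]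

lemma J_base (v : ℕ × ℕ) (hv : v.1 ≠ v.2) (L : Multiset (ℕ × ℕ)) (hL : (0 : ℕ × ℕ) ∉ L) :
    mm {v} * mt L ∈ Jbar := by
  rw [mt, mul_smul_comm]
  exact Submodule.smul_mem _ _ (Submodule.subset_span ⟨v.1, v.2, L, hv, hL, rfl⟩)

lemma notMem_aux {v u : ℕ × ℕ} (hv : v ≠ 0) {L : Multiset (ℕ × ℕ)} (hL : (0 : ℕ × ℕ) ∉ L) :
    (0 : ℕ × ℕ) ∉ (u + v) ::ₘ L.erase u := by
  rw [Multiset.mem_cons, not_or]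
  refine ⟨fun h => hv (add_eq_zero.1 h.symm).2, fun h => hL (Multiset.mem_of_mem_erase h)⟩

lemma J_mul (w : ℕ × ℕ) (hw : w ≠ 0) (x : MvPowerSeries (ℕ × Fin 2) ℂ) (hx : x ∈ Jbar) :
    mm {w} * x ∈ Jbar := by
  induction hx using Submodule.span_induction with
  | zero => simp
  | add x y _ _ hx hy => rw [mul_add]; exact add_mem hx hy
  | smul a x _ hx => rw [mul_smul_comm]; exact Submodule.smul_mem _ _ hx
  | mem x hx =>
    obtain ⟨a, b, L, hab, hL, rfl⟩ := hx
    rw [mul_left_comm, mm_of_mt L, mul_smul_comm, mul_smul_comm, mt_mul w hw L hL, mul_add,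
      ← Multiset.sum_map_mul_left]
    apply Submodule.smul_mem
    refine add_mem (J_base (a, b) hab _ ?_) (multiset_sum_mem _ ?_)
    · rw [Multiset.mem_cons, not_or]; exact ⟨hw.symm, hL⟩
    · intro y hy
      obtain ⟨u, hu, rfl⟩ := Multiset.mem_map.1 hy
      exact J_base (a, b) hab _ (notMem_aux hw hL)

/-- indexed version -/
noncomputable def H {n : ℕ} (f : Fin n → ℕ × ℕ) : MvPowerSeries (ℕ × Fin 2) ℂ :=
  mt (Finset.univ.val.map f)

lemma map_add_single {n : ℕ} (f : Fin n → ℕ × ℕ) (i : Fin n) (w : ℕ × ℕ) :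
    Finset.univ.val.map (f + Pi.single i w) =
      (f i + w) ::ₘ (Finset.univ.val.map f).erase (f i) := by
  have h : (Finset.univ : Finset (Fin n)).val = i ::ₘ (Finset.univ.erase i).val := by
    rw [Finset.erase_val, Multiset.cons_erase (Finset.mem_univ_val i)]
  rw [h, Multiset.map_cons, Multiset.map_cons, Multiset.erase_cons_head]
  congr 1
  · simp
  · apply Multiset.map_congr rfl
    intro j hj
    have : j ≠ i := Finset.ne_of_mem_erase (Finset.mem_def.2 hj)
    simp [this]

lemma map_cons {n : ℕ} (f : Fin n → ℕ × ℕ) (w : ℕ × ℕ) :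
    Finset.univ.val.map (Fin.cons w f : Fin (n + 1) → ℕ × ℕ) =
      w ::ₘ (Finset.univ.val.map f) := by
  rw [Fin.univ_val_map, Fin.univ_val_map, List.ofFn_succ]
  simp

lemma H_mul {n : ℕ} (f : Fin n → ℕ × ℕ) (hf : ∀ i, f i ≠ 0) (w : ℕ × ℕ) (hw : w ≠ 0) :
    mm {w} * H f = H (Fin.cons w f : Fin (n + 1) → ℕ × ℕ) + ∑ i, H (f + Pi.single i w) := by
  unfold H
  rw [mt_mul w hw _ (by
    intro h
    obtain ⟨i, -, hi⟩ := Multiset.mem_map.1 h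
    exact hf i hi), map_cons, Multiset.map_map]
  congr 1
  apply Finset.sum_congr rfl
  intro i _
  rw [map_add_single]
  rfl

/-- weight -/
noncomputable def c (u : ℕ × ℕ) : ℂ := (u.1 : ℂ) - u.2

lemma c_add (u v : ℕ × ℕ) : c (u + v) = c u + c v := by simp [c]; ring

/-- the derivation applied to `H f` -/
noncomputable def G {n : ℕ} (v : ℕ × ℕ) (f : Fin n → ℕ × ℕ) : MvPowerSeries (ℕ × Fin 2) ℂ :=
  ∑ i, c (f i) • H (f + Pi.single i v)

lemma ne_aux {n : ℕ} {f : Fin n → ℕ × ℕ} (hf : ∀ i, f i ≠ 0) (i : Fin n) (w : ℕ × ℕ) :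
    ∀ j, (f + (Pi.single i w : Fin n → ℕ × ℕ)) j ≠ 0 := by
  intro j h
  exact hf j (add_eq_zero.1 h).1

lemma G_mem (k : ℕ) (hk : 0 < k) : ∀ (n : ℕ) (f : Fin n → ℕ × ℕ), (∀ i, f i ≠ 0) →
    G (k, k) f ∈ Jbar := by
  intro n
  induction n with
  | zero => intro f _; simp [G]
  | succ n ih =>
    intro g hg
    obtain ⟨w, f, rfl⟩ : ∃ w f, g = Fin.cons w f := ⟨g 0, Fin.tail g, (Fin.cons_self_tail g).symm⟩
    have hw : w ≠ 0 := by simpa using hg 0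
    have hf : ∀ i, f i ≠ 0 := fun i => by simpa using hg i.succ
    have hv : ((k, k) : ℕ × ℕ) ≠ 0 := by simp [hk.ne']
    have hwv : w + (k, k) ≠ 0 := fun h => hw (add_eq_zero.1 h).1
    set v : ℕ × ℕ := (k, k) with hvdef
    have e1 : G v (Fin.cons w f : Fin (n + 1) → ℕ × ℕ) =
        c w • H (Fin.cons (w + v) f : Fin (n + 1) → ℕ × ℕ) +
        ∑ i, c (f i) • H (Fin.cons w (f + Pi.single i v) : Fin (n + 1) → ℕ × ℕ) := by
      unfold G
      rw [Fin.sum_univ_succ]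
      congr 1
      · congr 2
        funext j
        refine Fin.cases ?_ (fun j => ?_) j <;> simp
      · apply Finset.sum_congr rfl
        intro i _
        congr 2
        funext j
        refine Fin.cases ?_ (fun j => ?_) j
        · simp
        · by_cases h : j = i
          · subst h; simp
          · simp [h]
    have e2 : mm {w} * G v f = (∑ i, c (f i) •
          H (Fin.cons w (f + Pi.single i v) : Fin (n + 1) → ℕ × ℕ)) +
        ∑ i, ∑ j, c (f i) • H (f + Pi.single i v + Pi.single j w) := by
      unfold G
      rw [Finset.mul_sum, ← Finset.sum_add_distrib]
      apply Finset.sum_congr rfl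
      intro i _
      rw [mul_smul_comm, H_mul _ (ne_aux hf i v) w hw, smul_add, Finset.smul_sum]
    have e3 : ∑ j, G v (f + Pi.single j w) =
        (∑ i, ∑ j, c (f i) • H (f + Pi.single i v + Pi.single j w)) +
        c w • ∑ i, H (f + Pi.single i (w + v)) := by
      unfold G
      rw [Finset.sum_comm, Finset.smul_sum, ← Finset.sum_add_distrib]
      apply Finset.sum_congr rfl
      intro i _
      have : ∀ j, c ((f + (Pi.single j w : Fin n → ℕ × ℕ)) i) • H (f + Pi.single j w + Pi.single i v) =
          c (f i) • H (f + Pi.single i v + Pi.single j w) +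
          if i = j then c w • H (f + Pi.single i (w + v)) else 0 := by
        intro j
        rw [add_right_comm f (Pi.single j w)]
        by_cases h : i = j
        · subst h
          rw [Pi.add_apply, Pi.single_eq_same, c_add, add_smul, if_pos rfl, add_comm w v,
            Pi.single_add, ← add_assoc]
        · rw [if_neg h, Pi.add_apply, Pi.single_eq_of_ne h, add_zero, add_zero]
      rw [Finset.sum_congr rfl (fun j _ => this j), Finset.sum_add_distrib, Finset.sum_ite_eq]
      simp
    have e4 := H_mul f hf (w + v) hwv
    have key : G v (Fin.cons w f : Fin (n + 1) → ℕ × ℕ) =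
        c w • (mm {w + v} * H f) + mm {w} * G v f - ∑ j, G v (f + Pi.single j w) := by
      rw [e1, e2, e3, e4, smul_add]; abel
    rw [key]
    refine sub_mem (add_mem ?_ (J_mul w hw _ (ih f hf)))
      (Submodule.sum_mem _ fun j _ => ih _ (ne_aux hf j w))
    by_cases hc : w.1 = w.2
    · simp [c, hc]
    · apply Submodule.smul_mem
      apply J_base
      · simpa [hvdef] using hc
      · intro h
        obtain ⟨i, -, hi⟩ := Multiset.mem_map.1 h
        exact hf i hi

lemma G_mset (k : ℕ) (hk : 0 < k) (L : Multiset (ℕ × ℕ)) (hL : (0 : ℕ × ℕ) ∉ L) :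
    (L.map fun u => c u • mt ((u + (k, k)) ::ₘ L.erase u)).sum ∈ Jbar := by
  obtain ⟨n, f, rfl⟩ : ∃ (n : ℕ) (f : Fin n → ℕ × ℕ), L = Finset.univ.val.map f := by
    induction L using Quotient.inductionOn with
    | h l =>
      refine ⟨l.length, l.get, ?_⟩
      rw [Fin.univ_val_map, List.ofFn_get]; rfl
  have := G_mem k hk n f (fun i hi => hL (Multiset.mem_map.2 ⟨i, Finset.mem_univ_val i, hi⟩))
  rw [Multiset.map_map]
  unfold G H at this
  simp only [map_add_single] at this
  exact this

/-- target space -/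
noncomputable def W (m : ℕ) : Submodule ℂ (MvPowerSeries (ℕ × Fin 2) ℂ) :=
  Jbar ⊔ Submodule.span ℂ {x | ∃ ν : Multiset ℕ, (0 : ℕ) ∉ ν ∧
        m ≤ ν.card + ν.sum ∧ x = mm (bip ν)}

lemma W_anti {m m' : ℕ} (h : m ≤ m') : W m' ≤ W m := by
  apply sup_le_sup_left
  apply Submodule.span_mono
  rintro x ⟨ν, h0, h1, h2⟩
  exact ⟨ν, h0, h.trans h1, h2⟩

/-- multiset `(λ,0)(0,1)^n` -/
def B (l : Multiset ℕ) (n : ℕ) : Multiset (ℕ × ℕ) :=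
  l.map (fun i => (i, 0)) + Multiset.replicate n (0, 1)

lemma zero_B {l : Multiset ℕ} (h : 0 ∉ l) (n : ℕ) : (0 : ℕ × ℕ) ∉ B l n := by
  intro hm
  rcases Multiset.mem_add.1 hm with h1 | h1
  · obtain ⟨i, hi, h2⟩ := Multiset.mem_map.1 h1
    simp only [Prod.mk_eq_zero, and_true] at h2
    subst h2; exact h hi
  · have := Multiset.eq_of_mem_replicate h1
    simp [Prod.ext_iff] at this

lemma B_erase_left {l : Multiset ℕ} {i : ℕ} (hi : i ∈ l) (n : ℕ) :
    (B l n).erase (i, 0) = B (l.erase i) n := by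
  unfold B
  rw [Multiset.erase_add_left_pos _ (Multiset.mem_map_of_mem (fun i => ((i, 0) : ℕ × ℕ)) hi),
    Multiset.map_erase_of_mem _ _ hi]

lemma B_erase_right (l : Multiset ℕ) (n : ℕ) :
    (B l (n + 1)).erase (0, 1) = B l n := by
  unfold B
  rw [Multiset.replicate_succ, Multiset.add_cons, Multiset.erase_cons_head]

lemma T_mem : ∀ (t : ℕ) (l : Multiset ℕ) (n r : ℕ), 0 ∉ l → 0 < r → t ≤ r →
    l.sum + r = n + t → mt ((r, t) ::ₘ B l n) ∈ W (l.card + 1 + n) := by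
  intro t
  induction t with
  | zero =>
    intro l n r hl hr _ hs
    have : (r, 0) ::ₘ B l n = bip (r ::ₘ l) := by
      unfold B bip
      rw [Multiset.map_cons, Multiset.sum_cons, Multiset.cons_add, add_comm r, hs, add_zero]
    rw [this, mt]
    apply Submodule.smul_mem
    apply Submodule.mem_sup_right
    apply Submodule.subset_span
    refine ⟨r ::ₘ l, ?_, ?_, rfl⟩
    · rw [Multiset.mem_cons, not_or]; exact ⟨hr.ne, hl⟩
    · simp; omega
  | succ t ih =>
    intro l n r hl hr htr hs
    have hne : ((r, t) : ℕ × ℕ) ≠ 0 := by simp [hr.ne']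
    have hp := mt_mul (r, t) hne (B l (n + 1)) (zero_B hl _)
    have hJ := J_base (r, t) (by dsimp only; omega) (B l (n + 1)) (zero_B hl _)
    have h1 := ih l (n + 1) r hl hr (by omega) (by omega)
    have hsum : ((B l (n + 1)).map fun u => mt ((u + (r, t)) ::ₘ (B l (n + 1)).erase u)).sum =
        (l.map fun i => mt ((i + r, t) ::ₘ B (l.erase i) (n + 1))).sum +
        ((n + 1 : ℕ) : ℂ) • mt ((r, t + 1) ::ₘ B l n) := by
      conv_lhs => rw [show (B l (n + 1)) = l.map (fun i => (i, 0)) +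
        Multiset.replicate (n + 1) (0, 1) from rfl]
      rw [Multiset.map_add, Multiset.sum_add, Multiset.map_map, Multiset.map_replicate,
        Multiset.sum_replicate]
      congr 1
      · congr 1
        apply Multiset.map_congr rfl
        intro i hi
        simp only [Function.comp]
        rw [show l.map (fun i => (i, 0)) +
          Multiset.replicate (n + 1) (0, 1) = (B l (n + 1)) from rfl, B_erase_left hi]
        simp
      · rw [show l.map (fun i => (i, 0)) +
          Multiset.replicate (n + 1) (0, 1) = (B l (n + 1)) from rfl, B_erase_right,
          Nat.cast_smul_eq_nsmul]
        simp [add_comm]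
    have h2 : (l.map fun i => mt ((i + r, t) ::ₘ B (l.erase i) (n + 1))).sum ∈
        W (l.card + 1 + n) := by
      apply multiset_sum_mem
      intro y hy
      obtain ⟨i, hi, rfl⟩ := Multiset.mem_map.1 hy
      have hc := Multiset.card_erase_add_one hi
      have hs' := Multiset.sum_erase hi
      have := ih (l.erase i) (n + 1) (i + r) (fun h => hl (Multiset.mem_of_mem_erase h))
        (by omega) (by omega) (by omega)
      exact W_anti (by omega) this
    have h3 : ((n + 1 : ℕ) : ℂ) • mt ((r, t + 1) ::ₘ B l n) ∈ W (l.card + 1 + n) := by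
      have : ((n + 1 : ℕ) : ℂ) • mt ((r, t + 1) ::ₘ B l n) = mm {(r, t)} * mt (B l (n + 1)) -
          mt ((r, t) ::ₘ B l (n + 1)) -
          (l.map fun i => mt ((i + r, t) ::ₘ B (l.erase i) (n + 1))).sum := by
        rw [hp, hsum]; abel
      rw [this]
      exact sub_mem (sub_mem (Submodule.mem_sup_left hJ) (W_anti (by omega) h1)) h2
    exact (Submodule.smul_mem_iff _ (by exact_mod_cast Nat.succ_ne_zero n)).1 h3

lemma main (k : ℕ) (hk : 0 < k) (l : Multiset ℕ) (h0 : (0 : ℕ) ∉ l) :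
    mm {((k : ℕ), (k : ℕ))} * mt (B l l.sum) ∈ W (l.card + l.sum) := by
  set L := B l l.sum with hLdef
  have hL : (0 : ℕ × ℕ) ∉ L := zero_B h0 _
  have hG := G_mset k hk L hL
  have hp := mt_mul (k, k) (by simp [hk.ne']) L hL
  have : mm {((k : ℕ), (k : ℕ))} * mt L = mt ((k, k) ::ₘ L) +
      (L.map fun u => (1 + c u) • mt ((u + (k, k)) ::ₘ L.erase u)).sum -
      (L.map fun u => c u • mt ((u + (k, k)) ::ₘ L.erase u)).sum := by
    rw [hp]
    simp only [add_smul, one_smul, Multiset.sum_map_add]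
    abel
  rw [this]
  refine sub_mem (add_mem ?_ ?_) (Submodule.mem_sup_left hG)
  · exact W_anti (by omega) (T_mem k l l.sum k h0 hk le_rfl rfl)
  · apply multiset_sum_mem
    intro y hy
    obtain ⟨u, hu, rfl⟩ := Multiset.mem_map.1 hy
    rcases Multiset.mem_add.1 hu with h1 | h1
    · obtain ⟨i, hi, rfl⟩ := Multiset.mem_map.1 h1
      apply Submodule.smul_mem
      rw [hLdef, B_erase_left hi]
      have hc := Multiset.card_erase_add_one hi
      have hs' := Multiset.sum_erase hi
      have := T_mem k (l.erase i) l.sum (i + k) (fun h => h0 (Multiset.mem_of_mem_erase h))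
        (by omega) (by omega) (by omega)
      have h2 := W_anti (m := l.card + l.sum) (by omega) this
      simpa using h2
    · have := Multiset.eq_of_mem_replicate h1
      subst this
      simp [c]

end Aux

/-- In `S̄`, the product `m̄_{(k,k)} m̄_{(λ,0)(0,1)^{|λ|}}` lies in the span of the
`m̄_{(ν,0)(0,1)^{|ν|}}` over partitions `ν` with `ℓ(ν)+|ν| ≥ ℓ(λ)+|λ|`. -/
theorem stmt15 (k : ℕ) (hk : 0 < k) (lam : Multiset ℕ) (h0 : (0 : ℕ) ∉ lam) :
    mm {((k : ℕ), (k : ℕ))} * mm (bip lam) ∈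
      Jbar ⊔ Submodule.span ℂ {x | ∃ ν : Multiset ℕ, (0 : ℕ) ∉ ν ∧
        lam.card + lam.sum ≤ ν.card + ν.sum ∧ x = mm (bip ν)} := by
  have h := Aux.main k hk lam h0
  rw [Aux.mm_of_mt (bip lam), mul_smul_comm]
  exact Submodule.smul_mem _ _ h
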